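/- Let N be a positive integer and ω = exp(2πi/N). Then Σ_{0 ≤ k₁ ≤ k₂ ≤ N−1} (ω;ω)_{k₂} · ω^{k₁²+k₁} · [k₂ choose k₁]_ω = Σ_{a,b ≥ 0, a+b ≤ N−1} (ω;ω)_{a+b} · ω^{−ab}. (The right-hand side is Kashaev's invariant of the (5,2)-torus knot at the N-th root of unity; the left-hand side is the value X₂⁽⁰⁾(ω) of the q-series X₂⁽⁰⁾(q) = Σ_{n≥0} Σ_{c=0}^n (q;q)_n q^{c²+c} [n choose c]_q at q = ω, where all terms with n ≥ N vanish.) -/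

import Mathlib

/-- The finite q-Pochhammer symbol `(x;q)_n = ∏_{i=1}^n (1 - x q^{i-1})`;
in particular `(ω;ω)_n = qPoch ω ω n = ∏_{i=1}^n (1 - ω^i)`. -/
noncomputable def qPoch (q x : ℂ) (n : ℕ) : ℂ := ∏ i ∈ Finset.range n, (1 - x * q ^ i)

/-- The Gaussian binomial coefficient `[n choose c]_q`. -/
noncomputable def qBinom (q : ℂ) (n c : ℕ) : ℂ :=
  if c ≤ n then qPoch q q n / (qPoch q q c * qPoch q q (n - c)) else 0

/-- `phi q m i = ∑_c q^(c²+c+ci) [m choose c]`, defined by its recursion in `m`. -/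
noncomputable def phi (q : ℂ) : ℕ → ℕ → ℂ
  | 0, _ => 1
  | m + 1, i => phi q m i + q ^ (m + i + 2) * phi q m (i + 1)

/-- `CC q r j t = ∑_{i+m=t} r^(ij) phi_m(i)`, with `r = q⁻¹`. -/
noncomputable def CC (q r : ℂ) (j t : ℕ) : ℂ :=
  ∑ i ∈ Finset.range (t + 1), r ^ (i * j) * phi q (t - i) i

/-- The part of `CC` with `i ≥ 1`. -/
noncomputable def DD (q r : ℂ) (j t : ℕ) : ℂ := CC q r j t - phi q t 0

noncomputable def GG (q r : ℂ) (n : ℕ) : ℂ := ∑ j ∈ Finset.range n, DD q r j (n - 1 - j)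

theorem DD_zero (q r : ℂ) (j : ℕ) : DD q r j 0 = 0 := by
  simp [DD, CC, phi]

theorem DD_step (q r : ℂ) (h : q * r = 1) (j t : ℕ) :
    q ^ (t + 1 + j + 1) * DD q r j (t + 1) =
      CC q r j (t + 1) - r ^ ((t + 1) * j) - CC q r j t := by
  have e1 : DD q r j (t + 1) =
      ∑ i ∈ Finset.range (t + 1), r ^ ((i + 1) * j) * phi q (t - i) (i + 1) := by
    unfold DD CC
    rw [Finset.sum_range_succ']
    simp
  have e2 : CC q r j (t + 1) =
      ∑ i ∈ Finset.range (t + 1), r ^ (i * j) * phi q (t + 1 - i) i + r ^ ((t + 1) * j) := by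
    unfold CC
    rw [Finset.sum_range_succ _ (t + 1)]
    simp [phi]
  rw [e1, e2, add_sub_cancel_right]
  unfold CC
  rw [← Finset.sum_sub_distrib, Finset.mul_sum]
  refine Finset.sum_congr rfl fun i hi => ?_
  have hi' : i ≤ t := by simpa [Nat.lt_succ_iff] using hi
  obtain ⟨m, rfl⟩ := Nat.exists_eq_add_of_le hi'
  have a1 : i + m + 1 - i = m + 1 := by omega
  have a2 : i + m - i = m := by omega
  rw [a1, a2, phi]
  have hj : q ^ j * r ^ j = 1 := by rw [← mul_pow, h, one_pow]
  have : q ^ (i + m + 1 + j + 1) * r ^ ((i + 1) * j) =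
      q ^ (m + i + 2) * r ^ (i * j) * (q ^ j * r ^ j) := by ring
  rw [← mul_assoc, this, hj]
  ring

theorem GG_step (q r : ℂ) (h : q * r = 1) (n : ℕ) :
    (1 - q ^ (n + 1)) * GG q r (n + 1) =
      GG q r n + ∑ a ∈ Finset.range (n + 1), r ^ (a * (n - a)) - phi q n 0 := by
  unfold GG
  rw [Finset.sum_range_succ, Finset.sum_range_succ]
  have z : n + 1 - 1 - n = 0 := by omega
  rw [z, DD_zero, add_zero, Finset.mul_sum]
  have key : ∀ j ∈ Finset.range n, (1 - q ^ (n + 1)) * DD q r j (n + 1 - 1 - j) =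
      DD q r j (n - 1 - j) + r ^ (j * (n - j))
        - (phi q (n - j) 0 - phi q (n - (j + 1)) 0) := by
    intro j hj
    rw [Finset.mem_range] at hj
    obtain ⟨t, rfl⟩ := Nat.exists_eq_add_of_lt hj
    have a1 : j + t + 1 + 1 - 1 - j = t + 1 := by omega
    have a2 : j + t + 1 - 1 - j = t := by omega
    have a3 : j + t + 1 - j = t + 1 := by omega
    have a4 : j + t + 1 - (j + 1) = t := by omega
    rw [a1, a2, a3, a4]
    have s := DD_step q r h j t
    have a5 : t + 1 + j + 1 = j + t + 1 + 1 := by omega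
    rw [a5] at s
    rw [sub_mul, s, mul_comm j (t + 1)]
    unfold DD
    ring
  rw [Finset.sum_congr rfl key, Finset.sum_sub_distrib, Finset.sum_add_distrib,
    Finset.sum_range_sub' (fun j => phi q (n - j) 0)]
  simp [phi]
  ring

theorem qPoch_succ (q : ℂ) (n : ℕ) : qPoch q q (n + 1) = qPoch q q n * (1 - q ^ (n + 1)) := by
  unfold qPoch
  rw [Finset.prod_range_succ, pow_succ']

theorem telescope (q r : ℂ) (h : q * r = 1) (N : ℕ) :
    ∑ n ∈ Finset.range N, qPoch q q n *
      (∑ a ∈ Finset.range (n + 1), r ^ (a * (n - a)) - phi q n 0) = qPoch q q N * GG q r N := by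
  induction N with
  | zero => simp [GG]
  | succ n ih =>
    rw [Finset.sum_range_succ, ih, qPoch_succ, mul_assoc, GG_step q r h]
    ring

theorem qBinom_pascal (q : ℂ) (m c : ℕ) (hm : ∀ k ≤ m + 1, qPoch q q k ≠ 0) (hc : c ≤ m) :
    qBinom q (m + 1) (c + 1) = qBinom q m (c + 1) + q ^ (m - c) * qBinom q m c := by
  obtain ⟨d, rfl⟩ := Nat.exists_eq_add_of_le hc
  have a1 : c + d - c = d := by omega
  have a2 : c + d + 1 - (c + 1) = d := by omega
  unfold qBinom
  rw [if_pos (show c + 1 ≤ c + d + 1 by omega), if_pos (show c ≤ c + d by omega), a1, a2]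
  have hcc := hm (c + 1) (by omega)
  rw [qPoch_succ] at hcc
  have h1 := (mul_ne_zero_iff.mp hcc).1
  have h2 := (mul_ne_zero_iff.mp hcc).2
  have hd := hm d (by omega)
  rcases d with _ | e
  · rw [if_neg (show ¬ (c + 1 ≤ c + 0) by omega)]
    simp only [qPoch_succ, add_zero]
    have h0 : qPoch q q 0 = 1 := by simp [qPoch]
    rw [h0]
    field_simp
    ring
  · rw [if_pos (show c + 1 ≤ c + (e + 1) by omega)]
    have a3 : c + (e + 1) - (c + 1) = e := by omega
    rw [a3, qPoch_succ q (c + (e + 1)), qPoch_succ q c, qPoch_succ q e]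
    rw [qPoch_succ] at hd
    have h3 := (mul_ne_zero_iff.mp hd).1
    have h4 := (mul_ne_zero_iff.mp hd).2
    field_simp
    ring

theorem qBinom_zero (q : ℂ) (m : ℕ) (hm : qPoch q q m ≠ 0) : qBinom q m 0 = 1 := by
  have h0 : qPoch q q 0 = 1 := by simp [qPoch]
  simp [qBinom, h0, hm]

theorem phi_eq (q : ℂ) (m : ℕ) (hm : ∀ k ≤ m, qPoch q q k ≠ 0) (i : ℕ) :
    phi q m i = ∑ c ∈ Finset.range (m + 1), q ^ (c ^ 2 + c + c * i) * qBinom q m c := by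
  induction m generalizing i with
  | zero => simp [phi, qBinom_zero q 0 (hm 0 le_rfl)]
  | succ m ih =>
    have hm' : ∀ k ≤ m, qPoch q q k ≠ 0 := fun k hk => hm k (by omega)
    rw [phi, ih hm', ih hm', Finset.sum_range_succ' _ (m + 1)]
    have e : ∑ c ∈ Finset.range (m + 1), q ^ (c ^ 2 + c + c * i) * qBinom q m c =
        ∑ c ∈ Finset.range (m + 1), q ^ ((c + 1) ^ 2 + (c + 1) + (c + 1) * i) * qBinom q m (c + 1)
          + q ^ (0 ^ 2 + 0 + 0 * i) * qBinom q m 0 := by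
      rw [← Finset.sum_range_succ' (fun c => q ^ (c ^ 2 + c + c * i) * qBinom q m c) (m + 1),
        Finset.sum_range_succ _ (m + 1)]
      have : qBinom q m (m + 1) = 0 := by simp [qBinom]
      rw [this]; ring
    rw [e, qBinom_zero q m (hm m (by omega)), qBinom_zero q (m + 1) (hm _ le_rfl),
      Finset.mul_sum, add_right_comm, ← Finset.sum_add_distrib]
    congr 1
    refine Finset.sum_congr rfl fun c hc => ?_
    have hc' : c ≤ m := by simpa [Nat.lt_succ_iff] using hc
    rw [qBinom_pascal q m c hm hc']
    obtain ⟨d, rfl⟩ := Nat.exists_eq_add_of_le hc'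
    have a1 : c + d - c = d := by omega
    rw [a1]
    ring

theorem stmt_18 (N : ℕ) (hN : 0 < N) (ω : ℂ)
    (hω : ω = Complex.exp (2 * Real.pi * Complex.I / N)) :
    ∑ k₂ ∈ Finset.range N, ∑ k₁ ∈ Finset.range (k₂ + 1),
        qPoch ω ω k₂ * ω ^ (k₁ ^ 2 + k₁) * qBinom ω k₂ k₁
      = ∑ a ∈ Finset.range N, ∑ b ∈ Finset.range (N - a),
          qPoch ω ω (a + b) * ω ^ (-((a : ℤ) * (b : ℤ))) := by
  have hprim : IsPrimitiveRoot ω N := hω ▸ Complex.isPrimitiveRoot_exp N hN.ne'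
  have hω0 : ω ≠ 0 := by rw [hω]; exact Complex.exp_ne_zero _
  have hr : ω * ω⁻¹ = 1 := mul_inv_cancel₀ hω0
  have hne : ∀ k < N, qPoch ω ω k ≠ 0 := by
    intro k hk
    unfold qPoch
    rw [Finset.prod_ne_zero_iff]
    intro i hi
    rw [Finset.mem_range] at hi
    rw [← pow_succ', sub_ne_zero]
    exact (hprim.pow_ne_one_of_pos_of_lt (by omega) (by omega)).symm
  have hz : qPoch ω ω N = 0 := by
    obtain ⟨M, rfl⟩ := Nat.exists_eq_succ_of_ne_zero hN.ne'
    rw [Nat.succ_eq_add_one, qPoch_succ, hprim.pow_eq_one, sub_self, mul_zero]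
  have tel := telescope ω ω⁻¹ hr N
  rw [hz, zero_mul] at tel
  rw [← Finset.sum_range_diag_flip N
    (fun a b => qPoch ω ω (a + b) * ω ^ (-((a : ℤ) * (b : ℤ))))]
  simp only [mul_sub, Finset.sum_sub_distrib] at tel
  rw [sub_eq_zero] at tel
  have L : ∀ n ∈ Finset.range N, ∑ k₁ ∈ Finset.range (n + 1),
        qPoch ω ω n * ω ^ (k₁ ^ 2 + k₁) * qBinom ω n k₁ = qPoch ω ω n * phi ω n 0 := by
    intro n hn
    rw [Finset.mem_range] at hn
    rw [phi_eq ω n (fun k hk => hne k (by omega)), Finset.mul_sum]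
    refine Finset.sum_congr rfl fun c _ => ?_
    rw [mul_zero, add_zero, mul_assoc]
  rw [Finset.sum_congr rfl L, ← tel]
  refine Finset.sum_congr rfl fun n _ => ?_
  rw [Finset.mul_sum]
  refine Finset.sum_congr rfl fun a ha => ?_
  have ha' : a ≤ n := by simpa [Nat.lt_succ_iff] using ha
  rw [Nat.add_sub_cancel' ha', zpow_neg, inv_pow, ← zpow_natCast ω (a * (n - a))]
  push_cast
  rfl
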